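/- arXiv:2010.03353 — 2 statements merged into one kernel-verified Lean document; each statement's English description precedes it below -/
import Mathlib

section
/- Let 𝔸 be a first-order homogeneous differential operator of the form 𝔸u = Σⱼ 𝔸ⱼ∂ⱼu on ℝ³ that fails to be elliptic. Then for every 1 ≤ p < ∞ there exists a sequence ψ_k ∈ C_c^∞(ℝ³; ℝ³) such that sup_k ‖𝔸ψ_k‖_{Lᵖ(ℝ³)} < ∞ but ‖Dψ_k‖_{Lᵖ(ℝ³)} → ∞. -/
open MeasureTheory Filter
open scoped ENNReal

noncomputable def pd (j : Fin 3) (f : (Fin 3 → ℝ) → ℝ) (x : Fin 3 → ℝ) : ℝ :=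
  fderiv ℝ f x (Pi.single j 1)

/-- The Jacobian matrix `Du` of a vector field `u : ℝ³ → ℝ³`. -/
noncomputable def jac (u : (Fin 3 → ℝ) → (Fin 3 → ℝ)) (x : Fin 3 → ℝ) :
    Fin 3 → Fin 3 → ℝ :=
  fun i j => pd j (fun y => u y i) x

/-- The operator `𝔸u = Σⱼ 𝔸ⱼ ∂ⱼu`. -/
noncomputable def Aop {N : ℕ} (A : Fin 3 → (Fin 3 → ℝ) →ₗ[ℝ] (Fin N → ℝ))
    (u : (Fin 3 → ℝ) → (Fin 3 → ℝ)) (x : Fin 3 → ℝ) : Fin N → ℝ :=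
  ∑ j, A j (fun i => pd j (fun y => u y i) x)

/-- The linear form `x ↦ ⟨x, ξ⟩`. -/
noncomputable def linForm (ξ : Fin 3 → ℝ) : (Fin 3 → ℝ) →L[ℝ] ℝ :=
  ∑ j, ξ j • ContinuousLinearMap.proj (R := ℝ) (φ := fun _ : Fin 3 => ℝ) j

lemma linForm_single (ξ : Fin 3 → ℝ) (j : Fin 3) : linForm ξ (Pi.single j 1) = ξ j := by
  simp [linForm, Pi.single_apply]

/-- The oscillating field `ρ(x) sin(k⟨x,ξ⟩ + θ) v`. -/
noncomputable def osc (ρ : (Fin 3 → ℝ) → ℝ) (ξ v : Fin 3 → ℝ) (k θ : ℝ) (x : Fin 3 → ℝ) :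
    Fin 3 → ℝ :=
  fun i => ρ x * Real.sin (k * linForm ξ x + θ) * v i

lemma pd_osc (ρ : (Fin 3 → ℝ) → ℝ) (hρ : Differentiable ℝ ρ) (ξ v : Fin 3 → ℝ) (k θ : ℝ)
    (x : Fin 3 → ℝ) (i j : Fin 3) :
    pd j (fun y => osc ρ ξ v k θ y i) x =
      (pd j ρ x * Real.sin (k * linForm ξ x + θ)
        + ρ x * (Real.cos (k * linForm ξ x + θ) * (k * ξ j))) * v i := by
  have h1 : HasFDerivAt (fun y => k * linForm ξ y + θ) (k • linForm ξ) x :=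
    ((linForm ξ).hasFDerivAt.const_mul k).add_const θ
  have h2 := ((hρ x).hasFDerivAt.mul h1.sin).mul_const (v i)
  unfold pd osc
  erw [h2.fderiv]
  simp [linForm_single]
  ring

lemma Aop_osc {N : ℕ} (A : Fin 3 → (Fin 3 → ℝ) →ₗ[ℝ] (Fin N → ℝ))
    (ρ : (Fin 3 → ℝ) → ℝ) (hρ : Differentiable ℝ ρ) (ξ v : Fin 3 → ℝ)
    (h0 : ∑ j, ξ j • A j v = 0) (k θ : ℝ) (x : Fin 3 → ℝ) :
    Aop A (osc ρ ξ v k θ) x =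
      Real.sin (k * linForm ξ x + θ) • ∑ j, pd j ρ x • A j v := by
  have h : ∀ j, A j (fun i => pd j (fun y => osc ρ ξ v k θ y i) x) =
      Real.sin (k * linForm ξ x + θ) • (pd j ρ x • A j v)
      + (ρ x * Real.cos (k * linForm ξ x + θ) * k) • (ξ j • A j v) := by
    intro j
    have : (fun i => pd j (fun y => osc ρ ξ v k θ y i) x) =
      (Real.sin (k * linForm ξ x + θ) * pd j ρ x
      + ρ x * Real.cos (k * linForm ξ x + θ) * k * ξ j) • v := by
      funext i
      rw [pd_osc ρ hρ]
      simp only [Pi.smul_apply, smul_eq_mul]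
      ring
    rw [this, map_smul, add_smul, smul_smul, smul_smul]
  unfold Aop
  simp_rw [h]
  rw [Finset.sum_add_distrib, ← Finset.smul_sum, ← Finset.smul_sum, h0, smul_zero, add_zero]

lemma jac_osc_lower (ρ : (Fin 3 → ℝ) → ℝ) (hρ : Differentiable ℝ ρ)
    (h1 : ∀ x ∈ Metric.ball (0 : Fin 3 → ℝ) 1, ρ x = 1) (ξ v : Fin 3 → ℝ) (k θ : ℝ) (hk : 0 ≤ k)
    (x : Fin 3 → ℝ) (hx : x ∈ Metric.ball (0 : Fin 3 → ℝ) 1) (i j : Fin 3) :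
    k * |ξ j * v i| * |Real.cos (k * linForm ξ x + θ)| ≤ ‖jac (osc ρ ξ v k θ) x‖ := by
  have hd : pd j ρ x = 0 := by
    have : ρ =ᶠ[nhds x] fun _ => (1 : ℝ) := by
      filter_upwards [Metric.isOpen_ball.mem_nhds hx] with y hy using h1 y hy
    unfold pd
    rw [this.fderiv_eq]
    simp
  have h : ‖jac (osc ρ ξ v k θ) x i j‖ ≤ ‖jac (osc ρ ξ v k θ) x‖ :=
    (norm_le_pi_norm _ j).trans (norm_le_pi_norm _ i)
  refine le_trans (le_of_eq ?_) h
  unfold jac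
  rw [pd_osc ρ hρ, hd, h1 x hx, Real.norm_eq_abs]
  simp only [zero_mul, zero_add, one_mul, abs_mul, abs_of_nonneg hk]
  ring

lemma one_le_cos_add (t : ℝ) : 1 ≤ |Real.cos (t + 0)| + |Real.cos (t + Real.pi / 2)| := by
  rw [add_zero, Real.cos_add_pi_div_two, abs_neg]
  have h := Real.sin_sq_add_cos_sq t
  rw [← sq_abs, ← sq_abs (Real.cos t)] at h
  nlinarith [abs_nonneg (Real.sin t), abs_nonneg (Real.cos t)]

lemma osc_lower (ρ : (Fin 3 → ℝ) → ℝ) (hρ : Differentiable ℝ ρ)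
    (h1 : ∀ x ∈ Metric.ball (0 : Fin 3 → ℝ) 1, ρ x = 1) (ξ v : Fin 3 → ℝ) (k : ℝ) (hk : 0 ≤ k)
    (i j : Fin 3) (q : ℝ≥0∞) (hq : 1 ≤ q) :
    ∃ θ : ℝ, ENNReal.ofReal (k * |ξ j * v i|) *
        eLpNorm (fun _ : Fin 3 → ℝ => (1 : ℝ)) q (volume.restrict (Metric.ball 0 1)) / 2
      ≤ eLpNorm (fun x => jac (osc ρ ξ v k θ) x) q volume := by
  set μ := (volume : Measure (Fin 3 → ℝ)).restrict (Metric.ball 0 1) with hμ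
  set c := k * |ξ j * v i| with hc
  have hc0 : 0 ≤ c := by positivity
  let g : ℝ → (Fin 3 → ℝ) → ℝ := fun θ x => c * |Real.cos (k * linForm ξ x + θ)|
  have hg : ∀ θ, AEStronglyMeasurable (g θ) μ := by
    intro θ
    apply Continuous.aestronglyMeasurable
    fun_prop
  have hle : ∀ θ, eLpNorm (g θ) q μ ≤ eLpNorm (fun x => jac (osc ρ ξ v k θ) x) q volume := by
    intro θ
    refine le_trans ?_ (eLpNorm_mono_measure _ (Measure.restrict_le_self (s := Metric.ball 0 1)))
    apply eLpNorm_mono_ae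
    filter_upwards [ae_restrict_mem Metric.isOpen_ball.measurableSet] with x hx
    rw [Real.norm_of_nonneg (by positivity)]
    exact jac_osc_lower ρ hρ h1 ξ v k θ hk x hx i j
  have hsum : ENNReal.ofReal c * eLpNorm (fun _ : Fin 3 → ℝ => (1 : ℝ)) q μ
      ≤ eLpNorm (g 0) q μ + eLpNorm (g (Real.pi / 2)) q μ := by
    refine le_trans ?_ (eLpNorm_add_le (hg _) (hg _) hq)
    have : ENNReal.ofReal c = ‖c‖ₑ := by
      rw [Real.enorm_of_nonneg hc0]
    rw [this, ← eLpNorm_const_smul]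
    apply eLpNorm_mono
    intro x
    have := one_le_cos_add (k * linForm ξ x)
    simp only [Pi.smul_apply, Pi.add_apply, smul_eq_mul, mul_one, g]
    rw [Real.norm_of_nonneg hc0, Real.norm_of_nonneg (by positivity)]
    nlinarith
  by_contra! hcon
  have a := (hle 0).trans_lt (hcon 0)
  have b := (hle (Real.pi / 2)).trans_lt (hcon (Real.pi / 2))
  have := hsum.trans_lt (ENNReal.add_lt_add a b)
  rw [ENNReal.add_halves] at this
  exact lt_irrefl _ this

/-- If the first-order homogeneous operator `𝔸u = Σⱼ 𝔸ⱼ ∂ⱼu` on `ℝ³` fails to be elliptic,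
then for every `1 ≤ p < ∞` there is a sequence `ψ_k ∈ C_c^∞(ℝ³;ℝ³)` with
`sup_k ‖𝔸ψ_k‖_{Lᵖ} < ∞` but `‖Dψ_k‖_{Lᵖ} → ∞`. -/
theorem nonelliptic_gives_concentration (N : ℕ)
    (A : Fin 3 → (Fin 3 → ℝ) →ₗ[ℝ] (Fin N → ℝ))
    (hne : ∃ ξ : Fin 3 → ℝ, ξ ≠ 0 ∧ ∃ v : Fin 3 → ℝ, v ≠ 0 ∧ ∑ j, ξ j • A j v = 0)
    (p : ℝ) (hp : 1 ≤ p) :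
    ∃ ψ : ℕ → (Fin 3 → ℝ) → (Fin 3 → ℝ),
      (∀ k, ContDiff ℝ (⊤ : ℕ∞) (ψ k) ∧ HasCompactSupport (ψ k)) ∧
      (∃ C : ℝ≥0∞, C < ⊤ ∧
        ∀ k, eLpNorm (fun x => Aop A (ψ k) x) (ENNReal.ofReal p) volume ≤ C) ∧
      Tendsto (fun k => eLpNorm (fun x => jac (ψ k) x) (ENNReal.ofReal p) volume)
        atTop (nhds ⊤) := by
  obtain ⟨ξ, hξ, v, hv, h0⟩ := hne
  obtain ⟨j, hj⟩ := Function.ne_iff.1 hξ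
  obtain ⟨i, hi⟩ := Function.ne_iff.1 hv
  have hq : 1 ≤ ENNReal.ofReal p := by simpa using ENNReal.ofReal_le_ofReal hp
  let b : ContDiffBump (0 : Fin 3 → ℝ) := ⟨1, 2, one_pos, one_lt_two⟩
  have hbs : ContDiff ℝ (⊤ : ℕ∞) b := b.contDiff
  have hbd : Differentiable ℝ b := hbs.differentiable (by simp)
  have hb1 : ∀ x ∈ Metric.ball (0 : Fin 3 → ℝ) 1, b x = 1 := fun x hx =>
    b.one_of_mem_closedBall (Metric.ball_subset_closedBall hx)
  have key := fun k : ℕ => osc_lower b hbd hb1 ξ v k (Nat.cast_nonneg k) i j _ hq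
  choose θ hθ using key
  refine ⟨fun k => osc b ξ v k (θ k), fun k => ⟨?_, ?_⟩, ?_, ?_⟩
  · rw [contDiff_pi]
    intro i
    unfold osc
    have : ContDiff ℝ (⊤ : ℕ∞) (linForm ξ) := (linForm ξ).contDiff
    exact (hbs.mul (Real.contDiff_sin.comp ((contDiff_const.mul this).add contDiff_const))).mul
      contDiff_const
  · refine b.hasCompactSupport.mono ?_
    intro x hx
    rw [Function.mem_support] at hx ⊢
    intro h
    apply hx
    funext i
    simp [osc, h]
  · let G : (Fin 3 → ℝ) → (Fin N → ℝ) := fun x => ∑ j, pd j b x • A j v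
    have hf : Continuous (fderiv ℝ b) := hbs.continuous_fderiv (by simp)
    have hG : Continuous G := by
      unfold G pd
      fun_prop
    have hGc : HasCompactSupport G := by
      refine (b.hasCompactSupport.fderiv (𝕜 := ℝ)).mono ?_
      intro x hx
      rw [Function.mem_support] at hx ⊢
      intro h
      apply hx
      simp [G, pd, h]
    refine ⟨eLpNorm G (ENNReal.ofReal p) volume, (hG.memLp_of_hasCompactSupport hGc).2, fun k => ?_⟩
    apply eLpNorm_mono
    intro x
    rw [Aop_osc A b hbd ξ v h0, norm_smul]
    exact mul_le_of_le_one_left (norm_nonneg _) (Real.abs_sin_le_one _)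
  · refine tendsto_nhds_top_mono ?_ (Eventually.of_forall hθ)
    set M := eLpNorm (fun _ : Fin 3 → ℝ => (1 : ℝ)) (ENNReal.ofReal p)
      (volume.restrict (Metric.ball 0 1)) with hM
    have hc : 0 < |ξ j * v i| := abs_pos.2 (mul_ne_zero hj hi)
    have hM0 : M ≠ 0 := by
      rw [hM, Ne, eLpNorm_eq_zero_iff aestronglyMeasurable_const (by positivity)]
      intro h
      have h2 : ∀ᵐ x ∂((volume : Measure (Fin 3 → ℝ)).restrict (Metric.ball 0 1)), False := by
        filter_upwards [h] with x hx
        simp at hx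
      rw [ae_iff] at h2
      simp only [not_false_eq_true, Set.ofPred_true, Measure.restrict_apply_univ] at h2
      exact (Metric.measure_ball_pos volume (0 : Fin 3 → ℝ) one_pos).ne' h2
    have h1 : Tendsto (fun k : ℕ => ENNReal.ofReal ((k : ℝ) * |ξ j * v i|)) atTop (nhds ⊤) :=
      ENNReal.tendsto_ofReal_atTop.comp
        (tendsto_natCast_atTop_atTop.atTop_mul_const hc)
    have h2 := ENNReal.Tendsto.mul_const (b := M) h1 (Or.inl ENNReal.top_ne_zero)
    rw [ENNReal.top_mul hM0] at h2
    have h3 := ENNReal.Tendsto.div_const (b := 2) h2 (Or.inl ENNReal.top_ne_zero)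
    rwa [ENNReal.top_div_of_ne_top (by simp)] at h3
end

section
/- (Localized Bourgain–Brezis estimate) There exists a constant c = c(n) > 0 such that for every Φ ∈ C(closure of (0,1)ⁿ; ℝⁿ) ∩ C¹((0,1)ⁿ; ℝⁿ) with div(Φ) = 0 in (0,1)ⁿ, and for every φ ∈ C_c^∞((0,1)ⁿ; ℝⁿ), one has ∫_{(0,1)ⁿ} ⟨Φ, φ⟩ dx ≤ c ‖Φ‖_{L¹((0,1)ⁿ)} ‖∇φ‖_{Lⁿ((0,1)ⁿ)}. -/
open MeasureTheory
open scoped ENNReal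

noncomputable def pdn {n : ℕ} (j : Fin n) (f : (Fin n → ℝ) → ℝ) (x : Fin n → ℝ) : ℝ :=
  fderiv ℝ f x (Pi.single j 1)

/-- The Jacobian `∇φ` of a vector field on `ℝⁿ`. -/
noncomputable def jacn {n : ℕ} (φ : (Fin n → ℝ) → (Fin n → ℝ)) (x : Fin n → ℝ) :
    Fin n → Fin n → ℝ :=
  fun i j => pdn j (fun y => φ y i) x

/-- The open unit cube `(0,1)ⁿ`. -/
def unitCube (n : ℕ) : Set (Fin n → ℝ) := {x | ∀ j, x j ∈ Set.Ioo (0 : ℝ) 1}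

lemma cube_prob (d : ℕ) :
    IsProbabilityMeasure (volume.restrict (Set.Icc (0 : Fin d → ℝ) 1)) := by
  constructor
  rw [Measure.restrict_apply_univ, Real.volume_Icc_pi]
  simp

lemma avg_pow_le (d : ℕ) (M : (Fin d → ℝ) → ℝ) (hM : Continuous M) (h0 : ∀ x, 0 ≤ M x)
    (hc : HasCompactSupport M) (x : Fin d → ℝ) (r : ℝ) (hr : 0 < r) :
    (∫ z in Set.Icc (0 : Fin d → ℝ) 1, M (x + r • (x - z))) ^ (d + 1) ≤
      (r ^ d)⁻¹ * ∫ y, M y ^ (d + 1) := by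
  have := cube_prob d
  have hcont : Continuous (fun z => M (x + r • (x - z))) := by fun_prop
  have hIntegr : Integrable (fun y => M y ^ (d + 1)) := by
    apply (hM.pow _).integrable_of_hasCompactSupport
    exact hc.comp_left (g := fun t : ℝ => t ^ (d + 1)) (by simp)
  have h1 := (convexOn_pow (d + 1)).map_integral_le (μ := volume.restrict (Set.Icc (0 : Fin d → ℝ) 1))
    (f := fun z => M (x + r • (x - z))) (by fun_prop) isClosed_Ici
    (Filter.Eventually.of_forall fun z => h0 _)
    (hcont.continuousOn.integrableOn_compact isCompact_Icc)
    ((hcont.pow (d + 1)).continuousOn.integrableOn_compact isCompact_Icc)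
  refine h1.trans ?_
  have h2 : Integrable (fun z => M (x + r • (x - z)) ^ (d + 1)) := by
    have := ((hIntegr.comp_add_left x).comp_smul hr.ne').comp_sub_left x
    exact this
  have h3 : ∫ z, M (x + r • (x - z)) ^ (d + 1) = (r ^ d)⁻¹ * ∫ y, M y ^ (d + 1) := by
    rw [integral_sub_left_eq_self (fun w => M (x + r • w) ^ (d + 1)) volume x,
      Measure.integral_comp_smul volume (fun w => M (x + w) ^ (d + 1)) r,
      integral_add_left_eq_self (fun w => M w ^ (d + 1)) x]
    rw [abs_of_pos (by positivity)]
    simp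
  rw [← h3]
  exact setIntegral_le_integral h2 (Filter.Eventually.of_forall fun z => pow_nonneg (h0 _) _)

lemma avg_le (d : ℕ) (M : (Fin d → ℝ) → ℝ) (hM : Continuous M) (h0 : ∀ x, 0 ≤ M x)
    (hc : HasCompactSupport M) (x : Fin d → ℝ) (r : ℝ) (hr : 0 < r) :
    (∫ z in Set.Icc (0 : Fin d → ℝ) 1, M (x + r • (x - z))) ≤
      r ^ (((d : ℝ) + 1)⁻¹ - 1) * (∫ y, M y ^ (d + 1)) ^ (((d : ℝ) + 1)⁻¹) := by
  have h := avg_pow_le d M hM h0 hc x r hr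
  have hI : 0 ≤ ∫ z in Set.Icc (0 : Fin d → ℝ) 1, M (x + r • (x - z)) :=
    integral_nonneg fun z => h0 _
  have hJ : 0 ≤ ∫ y, M y ^ (d + 1) := integral_nonneg fun z => pow_nonneg (h0 _) _
  have h2 := Real.rpow_le_rpow (pow_nonneg hI _) h (z := ((d + 1 : ℕ) : ℝ)⁻¹) (by positivity)
  rw [Real.pow_rpow_inv_natCast hI (by omega), Real.mul_rpow (by positivity) hJ] at h2
  push_cast at h2
  convert h2 using 2
  rw [← Real.rpow_natCast, ← Real.rpow_neg hr.le, ← Real.rpow_mul hr.le]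
  congr 1
  field_simp
  ring

/-- The Lipschitz approximation of a function supported in the cube. -/
lemma slice_approx (d : ℕ) (u : (Fin d → ℝ) → ℝ) (hu : ContDiff ℝ 1 u)
    (hu0 : ∀ x, x ∉ unitCube d → u x = 0) (ε : ℝ) (hε : 0 < ε) (hε1 : ε ≤ 1) :
    ∃ ψ : (Fin d → ℝ) → ℝ, Differentiable ℝ ψ ∧ Continuous (fderiv ℝ ψ) ∧
      (∀ x, x ∉ unitCube d → ψ x = 0) ∧
      (∀ x ∈ Set.Icc (0 : Fin d → ℝ) 1, |u x - ψ x| ≤ ((d : ℝ) + 1) * ε ^ (((d : ℝ) + 1)⁻¹) *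
        (∫ y, ‖fderiv ℝ u y‖ ^ (d + 1)) ^ (((d : ℝ) + 1)⁻¹)) ∧
      (∀ x, ‖fderiv ℝ ψ x‖ ≤ 2 * ε ^ (((d : ℝ) + 1)⁻¹ - 1) *
        (∫ y, ‖fderiv ℝ u y‖ ^ (d + 1)) ^ (((d : ℝ) + 1)⁻¹)) := by
  have := cube_prob d
  set K := Set.Icc (0 : Fin d → ℝ) 1 with hK
  set S := (∫ y, ‖fderiv ℝ u y‖ ^ (d + 1)) ^ (((d : ℝ) + 1)⁻¹) with hS
  have huc : HasCompactSupport u := by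
    apply HasCompactSupport.intro (K := K) isCompact_Icc
    intro x hx
    apply hu0
    intro h
    exact hx ⟨fun j => (h j).1.le, fun j => (h j).2.le⟩
  have hu' : Continuous (fderiv ℝ u) := hu.continuous_fderiv one_ne_zero
  have hud : Differentiable ℝ u := hu.differentiable one_ne_zero
  have hu'c : HasCompactSupport (fderiv ℝ u) := huc.fderiv ℝ
  obtain ⟨B, hB⟩ := hu'.bounded_above_of_compact_support hu'c
  have hMc : HasCompactSupport (fun y => ‖fderiv ℝ u y‖) := hu'c.norm
  have key : ∀ x r, 0 < r → (∫ z in K, ‖fderiv ℝ u (x + r • (x - z))‖) ≤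
      r ^ (((d : ℝ) + 1)⁻¹ - 1) * S := fun x r hr =>
    avg_le d _ hu'.norm (fun _ => norm_nonneg _) hMc x r hr
  have hucont := hu.continuous
  have hIntegr : ∀ {F : Type} [NormedAddCommGroup F] (f : (Fin d → ℝ) → F), Continuous f →
      Integrable f (volume.restrict K) := fun f hf =>
    hf.continuousOn.integrableOn_compact isCompact_Icc
  -- derivative in x
  have hdx : ∀ x, HasFDerivAt (fun x => ∫ z in K, u (x + ε • (x - z)))
      (∫ z in K, (1 + ε) • fderiv ℝ u (x + ε • (x - z))) x := by
    intro x
    apply hasFDerivAt_integral_of_dominated_of_fderiv_le (s := Set.univ)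
      (F' := fun x z => (1 + ε) • fderiv ℝ u (x + ε • (x - z)))
      (bound := fun _ => (1 + ε) * B) Filter.univ_mem
    · refine Filter.Eventually.of_forall fun y => ?_
      have : Continuous fun z => u (y + ε • (y - z)) := by fun_prop
      exact this.aestronglyMeasurable
    · exact hIntegr _ (by fun_prop)
    · have : Continuous fun z => (1 + ε) • fderiv ℝ u (x + ε • (x - z)) := by fun_prop
      exact this.aestronglyMeasurable
    · refine Filter.Eventually.of_forall fun z y _ => ?_
      rw [norm_smul, Real.norm_of_nonneg (by positivity)]
      gcongr
      exact hB _
    · exact integrable_const _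
    · refine Filter.Eventually.of_forall fun z y _ => ?_
      have h1 : HasFDerivAt (fun y : Fin d → ℝ => y + ε • (y - z))
          ((1 + ε) • ContinuousLinearMap.id ℝ (Fin d → ℝ)) y := by
        have := (hasFDerivAt_id (𝕜 := ℝ) y).add (((hasFDerivAt_id (𝕜 := ℝ) y).sub_const z).const_smul ε)
        rw [add_smul, one_smul]
        exact this
      have := (hud (y + ε • (y - z))).hasFDerivAt.comp y h1
      have he : (1 + ε) • fderiv ℝ u (y + ε • (y - z)) = (fderiv ℝ u (y + ε • (y - z))).comp
          ((1 + ε) • ContinuousLinearMap.id ℝ (Fin d → ℝ)) := by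
        ext v
        simp
      rw [he]
      exact this
  have hde : ∀ x e, HasDerivAt (fun e : ℝ => ∫ z in K, u (x + e • (x - z)))
      (∫ z in K, fderiv ℝ u (x + e • (x - z)) (x - z)) e := by
    intro x e
    have hbc : Continuous fun z => B * ‖x - z‖ := by fun_prop
    refine (hasDerivAt_integral_of_dominated_loc_of_deriv_le (s := Set.univ)
      (F := fun e z => u (x + e • (x - z)))
      (F' := fun e z => fderiv ℝ u (x + e • (x - z)) (x - z))
      (bound := fun z => B * ‖x - z‖) Filter.univ_mem ?_ ?_ ?_ ?_ ?_ ?_).2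
    · refine Filter.Eventually.of_forall fun y => ?_
      have : Continuous fun z => u (x + y • (x - z)) := by fun_prop
      exact this.aestronglyMeasurable
    · exact hIntegr _ (by fun_prop)
    · have : Continuous fun z => fderiv ℝ u (x + e • (x - z)) (x - z) := by fun_prop
      exact this.aestronglyMeasurable
    · refine Filter.Eventually.of_forall fun z y _ => ?_
      refine (ContinuousLinearMap.le_opNorm _ _).trans ?_
      gcongr
      exact hB _
    · exact hIntegr _ hbc
    · refine Filter.Eventually.of_forall fun z y _ => ?_
      have h1 : HasDerivAt (fun y : ℝ => x + y • (x - z)) (x - z) y := by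
        have := ((hasDerivAt_id y).smul_const (x - z)).const_add x
        simpa using this
      exact (hud (x + y • (x - z))).hasFDerivAt.comp_hasDerivAt y h1
  refine ⟨fun x => ∫ z in K, u (x + ε • (x - z)), fun x => (hdx x).differentiableAt, ?_, ?_, ?_, ?_⟩
  · have : (fderiv ℝ fun x => ∫ z in K, u (x + ε • (x - z))) =
        fun x => ∫ z in K, (1 + ε) • fderiv ℝ u (x + ε • (x - z)) := by
      ext1 x
      exact (hdx x).fderiv
    rw [this]
    apply continuous_parametric_integral_of_continuous
    · simp only [Function.uncurry_def]
      fun_prop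
    · exact isCompact_Icc
  · intro x hx
    apply setIntegral_eq_zero_of_forall_eq_zero
    intro z hz
    apply hu0
    intro h
    apply hx
    intro j
    have hj := h j
    have hz0 := hz.1 j
    have hz1 := hz.2 j
    simp only [Pi.add_apply, Pi.smul_apply, Pi.sub_apply, smul_eq_mul, Set.mem_Ioo, Pi.zero_apply,
      Pi.one_apply] at hj hz0 hz1
    constructor
    · by_contra hc
      nlinarith
    · by_contra hc
      nlinarith
  · intro x hx
    have hS0 : 0 ≤ S := Real.rpow_nonneg (integral_nonneg fun y => by positivity) _
    set f : ℝ → ℝ := fun e => ∫ z in K, u (x + e • (x - z)) with hf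
    have hf0 : f 0 = u x := by simp [hf]
    have hfd : ∀ e, 0 < e → |deriv f e| ≤ e ^ (((d : ℝ) + 1)⁻¹ - 1) * S := by
      intro e he
      rw [(hde x e).deriv]
      refine le_trans ?_ (key x e he)
      rw [← Real.norm_eq_abs]
      refine (norm_integral_le_integral_norm _).trans ?_
      apply setIntegral_mono_on
      · exact hIntegr _ (by fun_prop)
      · exact hIntegr _ (by fun_prop)
      · exact measurableSet_Icc
      · intro z hz
        refine (ContinuousLinearMap.le_opNorm _ _).trans ?_
        refine mul_le_of_le_one_right (norm_nonneg _) ?_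
        rw [pi_norm_le_iff_of_nonneg zero_le_one]
        intro j
        have := hz.1 j
        have := hz.2 j
        have := hx.1 j
        have := hx.2 j
        simp only [Pi.sub_apply, Pi.zero_apply, Pi.one_apply, Real.norm_eq_abs, abs_le] at *
        constructor <;> linarith
    set g : ℝ → ℝ := fun e => ((d : ℝ) + 1) * e ^ (((d : ℝ) + 1)⁻¹) * S with hg
    have hgd : ∀ e, 0 < e → HasDerivAt g (e ^ (((d : ℝ) + 1)⁻¹ - 1) * S) e := by
      intro e he
      have := ((Real.hasDerivAt_rpow_const (p := ((d : ℝ) + 1)⁻¹) (Or.inl he.ne')).const_mul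
        ((d : ℝ) + 1)).mul_const S
      have he2 : e ^ (((d : ℝ) + 1)⁻¹ - 1) * S =
          ((d : ℝ) + 1) * (((d : ℝ) + 1)⁻¹ * e ^ (((d : ℝ) + 1)⁻¹ - 1)) * S := by
        rw [mul_inv_cancel_left₀ (by positivity)]
      rw [he2]
      exact this
    have hgc : Continuous g := by
      have : Continuous fun e : ℝ => e ^ (((d : ℝ) + 1)⁻¹) :=
        Real.continuous_rpow_const (by positivity)
      fun_prop
    have hg0 : g 0 = 0 := by
      simp only [hg]
      rw [Real.zero_rpow (by positivity)]
      simp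
    have hfc : Continuous f := continuous_iff_continuousAt.2 fun e => (hde x e).continuousAt
    have hfdiff : ∀ e, DifferentiableAt ℝ f e := fun e => (hde x e).differentiableAt
    have mono : ∀ σ : ℝ, |σ| ≤ 1 → MonotoneOn (fun e => g e + σ * f e) (Set.Ici 0) := by
      intro σ hσ
      apply monotoneOn_of_deriv_nonneg (convex_Ici 0)
      · exact (hgc.add (continuous_const.mul hfc)).continuousOn
      · intro e he
        rw [interior_Ici] at he
        exact ((hgd e he).differentiableAt.add ((hfdiff e).const_mul σ)).differentiableWithinAt
      · intro e he
        rw [interior_Ici] at he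
        have h1 := ((hgd e he).add ((hfdiff e).hasDerivAt.const_mul σ)).deriv
        have h2 := hfd e he
        have h3 : |σ * deriv f e| ≤ e ^ (((d : ℝ) + 1)⁻¹ - 1) * S := by
          rw [abs_mul]
          exact (mul_le_of_le_one_left (abs_nonneg _) hσ).trans h2
        have h4 := (abs_le.1 h3).1
        have h5 : deriv (fun e => g e + σ * f e) e =
          e ^ (((d : ℝ) + 1)⁻¹ - 1) * S + σ * deriv f e := h1
        rw [h5]
        linarith
    have m1 := mono 1 (by simp) (Set.mem_Ici.2 le_rfl) (Set.mem_Ici.2 hε.le) hε.le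
    have m2 := mono (-1) (by simp) (Set.mem_Ici.2 le_rfl) (Set.mem_Ici.2 hε.le) hε.le
    simp only [hg0, hf0] at m1 m2
    change |u x - f ε| ≤ g ε
    rw [abs_le]
    constructor <;> linarith
  · intro x
    rw [(hdx x).fderiv, integral_smul, norm_smul, Real.norm_of_nonneg (by positivity), mul_assoc]
    apply mul_le_mul (by linarith) ((norm_integral_le_integral_norm _).trans (key x ε hε))
      (norm_nonneg _) (by norm_num)

/-- Deleting the `i`-th coordinate, as a continuous linear map. -/
noncomputable def delC {d : ℕ} (i : Fin (d + 1)) : (Fin (d + 1) → ℝ) →L[ℝ] (Fin d → ℝ) :=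
  ContinuousLinearMap.pi fun j => ContinuousLinearMap.proj (i.succAbove j)

lemma delC_apply {d : ℕ} (i : Fin (d + 1)) (x : Fin (d + 1) → ℝ) (j : Fin d) :
    delC i x j = x (i.succAbove j) := rfl

lemma delC_insertNth {d : ℕ} (i : Fin (d + 1)) (t : ℝ) (y : Fin d → ℝ) :
    delC i (i.insertNth t y : Fin (d + 1) → ℝ) = y := by
  ext j
  simp [delC_apply]

lemma delC_norm_le {d : ℕ} (i : Fin (d + 1)) (x : Fin (d + 1) → ℝ) : ‖delC i x‖ ≤ ‖x‖ := by
  rw [pi_norm_le_iff_of_nonneg (norm_nonneg _)]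
  intro j
  exact norm_le_pi_norm x _

lemma insertNth_mem_Icc {d : ℕ} (i : Fin (d + 1)) (t : ℝ) (y : Fin d → ℝ)
    (ht : t ∈ Set.Icc (0 : ℝ) 1) (hy : y ∈ Set.Icc (0 : Fin d → ℝ) 1) :
    (i.insertNth t y : Fin (d + 1) → ℝ) ∈ Set.Icc (0 : Fin (d + 1) → ℝ) 1 := by
  constructor
  · intro j
    refine Fin.succAboveCases i ?_ (fun k => ?_) j
    · simpa using ht.1
    · simpa using hy.1 k
  · intro j
    refine Fin.succAboveCases i ?_ (fun k => ?_) j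
    · simpa using ht.2
    · simpa using hy.2 k

lemma flux_identity {d : ℕ} (i : Fin (d + 1)) (Φ : (Fin (d + 1) → ℝ) → (Fin (d + 1) → ℝ))
    (hΦc : ContinuousOn Φ (Set.Icc 0 1))
    (hΦd : ∀ x ∈ unitCube (d + 1), DifferentiableAt ℝ Φ x)
    (hdiv : ∀ x ∈ unitCube (d + 1), ∑ j, pdn j (fun y => Φ y j) x = 0)
    (ψ : (Fin d → ℝ) → ℝ) (hψ : Differentiable ℝ ψ) (hψ' : Continuous (fderiv ℝ ψ))
    (hψ0 : ∀ y, y ∉ unitCube d → ψ y = 0) (a b c : ℝ) (ha : 0 ≤ a) (hab : a ≤ b) (hb : b ≤ 1) :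
    (b - c) * (∫ y in Set.Icc (0 : Fin d → ℝ) 1, Φ (i.insertNth b y) i * ψ y) -
      (a - c) * (∫ y in Set.Icc (0 : Fin d → ℝ) 1, Φ (i.insertNth a y) i * ψ y) =
    ∫ x in Set.Icc (i.insertNth a (0 : Fin d → ℝ) : Fin (d + 1) → ℝ) (i.insertNth b (1 : Fin d → ℝ)),
      (Φ x i * ψ (delC i x) + (x i - c) * fderiv ℝ ψ (delC i x) (delC i (Φ x))) := by
  classical
  set lo : Fin (d + 1) → ℝ := i.insertNth a (0 : Fin d → ℝ) with hlo
  set hi : Fin (d + 1) → ℝ := i.insertNth b (1 : Fin d → ℝ) with hhi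
  have hloi : lo i = a := by simp [hlo]
  have hhii : hi i = b := by simp [hhi]
  have hlok : ∀ k, lo (i.succAbove k) = 0 := by simp [hlo]
  have hhik : ∀ k, hi (i.succAbove k) = 1 := by simp [hhi]
  have hle : lo ≤ hi := by
    intro j
    refine Fin.succAboveCases i ?_ (fun k => ?_) j
    · rw [hloi, hhii]; exact hab
    · rw [hlok, hhik]; exact zero_le_one
  have hlo0 : 0 ≤ lo := by
    intro j
    refine Fin.succAboveCases i ?_ (fun k => ?_) j
    · rw [hloi]; exact ha
    · rw [hlok]; rfl
  have hhi1 : hi ≤ 1 := by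
    intro j
    refine Fin.succAboveCases i ?_ (fun k => ?_) j
    · rw [hhii]; exact hb
    · rw [hhik]; rfl
  have hsub : Set.Icc lo hi ⊆ Set.Icc 0 1 := Set.Icc_subset_Icc hlo0 hhi1
  set ζ : (Fin (d + 1) → ℝ) → ℝ := fun x => (x i - c) * ψ (delC i x) with hζ
  set ζ' : (Fin (d + 1) → ℝ) → ((Fin (d + 1) → ℝ) →L[ℝ] ℝ) := fun x =>
    (x i - c) • (fderiv ℝ ψ (delC i x)).comp (delC i) +
      ψ (delC i x) • (ContinuousLinearMap.proj i : (Fin (d + 1) → ℝ) →L[ℝ] ℝ) with hζ'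
  have hζd : ∀ x, HasFDerivAt ζ (ζ' x) x := by
    intro x
    have h1 : HasFDerivAt (fun x : Fin (d + 1) → ℝ => x i - c)
        (ContinuousLinearMap.proj i : (Fin (d + 1) → ℝ) →L[ℝ] ℝ) x :=
      (hasFDerivAt_apply i x).sub_const c
    have h2 := (hψ (delC i x)).hasFDerivAt.comp x (delC i).hasFDerivAt
    exact h1.mul h2
  have hζc : Continuous ζ := continuous_iff_continuousAt.2 fun x => (hζd x).continuousAt
  have hψc := hψ.continuous
  set f' : Fin (d + 1) → (Fin (d + 1) → ℝ) → ((Fin (d + 1) → ℝ) →L[ℝ] ℝ) := fun j x =>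
    Φ x j • ζ' x + ζ x • (if x ∈ unitCube (d + 1) then fderiv ℝ (fun y => Φ y j) x else 0) with hf'
  have hsum : ∀ x, ∑ j, f' j x (Pi.single j 1) =
      Φ x i * ψ (delC i x) + (x i - c) * fderiv ℝ ψ (delC i x) (delC i (Φ x)) := by
    intro x
    have h1 : ∑ j, Φ x j * ζ' x (Pi.single j 1) = ζ' x (Φ x) := by
      conv_rhs => rw [pi_eq_sum_univ' (Φ x)]
      rw [map_sum]
      refine Finset.sum_congr rfl fun j _ => ?_
      rw [map_smul, smul_eq_mul]
    have h2 : ∑ j, ζ x * (if x ∈ unitCube (d + 1) then fderiv ℝ (fun y => Φ y j) x else 0)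
        (Pi.single j 1) = 0 := by
      rw [← Finset.mul_sum]
      split_ifs with hx
      · have := hdiv x hx
        simp only [pdn] at this
        rw [this, mul_zero]
      · simp
    have h3 : ∑ j, f' j x (Pi.single j 1) = ∑ j, Φ x j * ζ' x (Pi.single j 1) +
        ∑ j, ζ x * (if x ∈ unitCube (d + 1) then fderiv ℝ (fun y => Φ y j) x else 0)
        (Pi.single j 1) := by
      rw [← Finset.sum_add_distrib]
      rfl
    rw [h3, h1, h2, add_zero]
    simp only [hζ', _root_.add_apply, _root_.smul_apply, smul_eq_mul,
      ContinuousLinearMap.comp_apply, ContinuousLinearMap.proj_apply]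
    ring
  have hΦj : ∀ j, ContinuousOn (fun x => Φ x j) (Set.Icc lo hi) := fun j =>
    (continuous_apply j).comp_continuousOn (hΦc.mono hsub)
  have key := integral_divergence_of_hasFDerivAt_off_countable' lo hi hle
    (fun j x => Φ x j * ζ x) f' ∅ Set.countable_empty
    (fun j => (hΦj j).mul hζc.continuousOn)
    (by
      intro x hx j
      have hxc : x ∈ unitCube (d + 1) := by
        intro k
        have := hx.1 k (Set.mem_univ _)
        exact ⟨(hlo0 k).trans_lt this.1, this.2.trans_le (hhi1 k)⟩
      have h1 : HasFDerivAt (fun y => Φ y j) (fderiv ℝ (fun y => Φ y j) x) x :=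
        (differentiableAt_pi.1 (hΦd x hxc) j).hasFDerivAt
      have := h1.mul (hζd x)
      simp only [hf', if_pos hxc]
      exact this)
    (by
      simp only [hsum]
      refine ContinuousOn.integrableOn_compact isCompact_Icc ?_
      apply ContinuousOn.add
      · exact (hΦj i).mul (by fun_prop)
      · apply ContinuousOn.mul (by fun_prop)
        apply ContinuousOn.clm_apply
        · fun_prop
        · exact (delC i).continuous.comp_continuousOn (hΦc.mono hsub))
  simp only [hsum] at key
  rw [key, Finset.sum_eq_single i]
  · have e1 : (lo ∘ i.succAbove) = 0 := by ext k; exact hlok k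
    have e2 : (hi ∘ i.succAbove) = 1 := by ext k; exact hhik k
    rw [e1, e2, hloi, hhii, ← integral_const_mul, ← integral_const_mul]
    congr 1
    · congr 1
      ext y
      simp only [hζ, delC_insertNth, Fin.insertNth_apply_same]
      ring
    · congr 1
      ext y
      simp only [hζ, delC_insertNth, Fin.insertNth_apply_same]
      ring
  · intro j _ hj
    obtain ⟨k, rfl⟩ := Fin.exists_succAbove_eq hj
    rw [setIntegral_eq_zero_of_forall_eq_zero, setIntegral_eq_zero_of_forall_eq_zero, sub_zero]
    · intro y _
      have : ψ (delC i ((i.succAbove k).insertNth (lo (i.succAbove k)) y)) = 0 := by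
        apply hψ0
        intro h
        have := h k
        rw [delC_apply, Fin.insertNth_apply_same, hlok] at this
        exact lt_irrefl _ this.1
      simp only [hζ, this, mul_zero]
    · intro y _
      have : ψ (delC i ((i.succAbove k).insertNth (hi (i.succAbove k)) y)) = 0 := by
        apply hψ0
        intro h
        have := h k
        rw [delC_apply, Fin.insertNth_apply_same, hhik] at this
        exact lt_irrefl _ this.2
      simp only [hζ, this, mul_zero]
  · simp

lemma flux_bound {d : ℕ} (i : Fin (d + 1)) (Φ : (Fin (d + 1) → ℝ) → (Fin (d + 1) → ℝ))
    (hΦc : ContinuousOn Φ (Set.Icc 0 1))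
    (hΦd : ∀ x ∈ unitCube (d + 1), DifferentiableAt ℝ Φ x)
    (hdiv : ∀ x ∈ unitCube (d + 1), ∑ j, pdn j (fun y => Φ y j) x = 0)
    (ψ : (Fin d → ℝ) → ℝ) (hψ : Differentiable ℝ ψ) (hψ' : Continuous (fderiv ℝ ψ))
    (hψ0 : ∀ y, y ∉ unitCube d → ψ y = 0) (P : ℝ)
    (hP : ∀ y, |ψ y| ≤ P) (hP' : ∀ y, ‖fderiv ℝ ψ y‖ ≤ P)
    (t : ℝ) (ht0 : 0 ≤ t) (ht1 : t ≤ 1) :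
    |∫ y in Set.Icc (0 : Fin d → ℝ) 1, Φ (i.insertNth t y) i * ψ y| ≤
      4 * P * ∫ x in Set.Icc (0 : Fin (d + 1) → ℝ) 1, ‖Φ x‖ := by
  have hP0 : 0 ≤ P := (abs_nonneg _).trans (hP 0)
  have hΦi : IntegrableOn (fun x => ‖Φ x‖) (Set.Icc 0 1) :=
    hΦc.norm.integrableOn_compact isCompact_Icc
  have aux : ∀ a b c : ℝ, 0 ≤ a → a ≤ b → b ≤ 1 → 0 ≤ c → c ≤ 1 →
      |∫ x in Set.Icc (i.insertNth a (0 : Fin d → ℝ) : Fin (d + 1) → ℝ)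
        (i.insertNth b (1 : Fin d → ℝ)),
      (Φ x i * ψ (delC i x) + (x i - c) * fderiv ℝ ψ (delC i x) (delC i (Φ x)))| ≤
      2 * P * ∫ x in Set.Icc (0 : Fin (d + 1) → ℝ) 1, ‖Φ x‖ := by
    intro a b c ha hab hb hc0 hc1
    have hsub : Set.Icc (i.insertNth a (0 : Fin d → ℝ) : Fin (d + 1) → ℝ)
        (i.insertNth b (1 : Fin d → ℝ)) ⊆ Set.Icc 0 1 :=
      Set.Icc_subset_Icc
        (insertNth_mem_Icc i a 0 ⟨ha, hab.trans hb⟩ ⟨le_rfl, zero_le_one⟩).1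
        (insertNth_mem_Icc i b 1 ⟨ha.trans hab, hb⟩ ⟨zero_le_one, le_rfl⟩).2
    rw [← Real.norm_eq_abs]
    have h1 := norm_integral_le_of_norm_le (μ := volume.restrict
        (Set.Icc (i.insertNth a (0 : Fin d → ℝ) : Fin (d + 1) → ℝ)
        (i.insertNth b (1 : Fin d → ℝ))))
      (f := fun x => Φ x i * ψ (delC i x) + (x i - c) * fderiv ℝ ψ (delC i x) (delC i (Φ x)))
      (g := fun x => 2 * P * ‖Φ x‖) ((hΦi.mono_set hsub).const_mul _) (by
        refine (ae_restrict_iff' measurableSet_Icc).2 (Filter.Eventually.of_forall fun x hx => ?_)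
        have hx' := hsub hx
        have b1 : |Φ x i * ψ (delC i x)| ≤ ‖Φ x‖ * P := by
          rw [abs_mul]
          exact mul_le_mul (norm_le_pi_norm (Φ x) i) (hP _) (abs_nonneg _) (norm_nonneg _)
        have b2 : |(x i - c) * fderiv ℝ ψ (delC i x) (delC i (Φ x))| ≤ 1 * (P * ‖Φ x‖) := by
          rw [abs_mul]
          apply mul_le_mul _ _ (abs_nonneg _) zero_le_one
          · have := hx'.1 i
            have := hx'.2 i
            simp only [Pi.zero_apply, Pi.one_apply] at *
            rw [abs_le]
            constructor <;> linarith
          · rw [← Real.norm_eq_abs]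
            refine (ContinuousLinearMap.le_opNorm _ _).trans ?_
            exact mul_le_mul (hP' _) (delC_norm_le i _) (norm_nonneg _) hP0
        rw [Real.norm_eq_abs]
        refine (abs_add_le _ _).trans ?_
        linarith)
    refine h1.trans ?_
    rw [integral_const_mul]
    apply mul_le_mul_of_nonneg_left _ (by positivity)
    apply setIntegral_mono_set hΦi
    · exact Filter.Eventually.of_forall fun x => norm_nonneg _
    · exact Filter.Eventually.of_forall hsub
  have i1 := flux_identity i Φ hΦc hΦd hdiv ψ hψ hψ' hψ0 0 t 0 le_rfl ht0 ht1
  have i2 := flux_identity i Φ hΦc hΦd hdiv ψ hψ hψ' hψ0 t 1 1 ht0 ht1 le_rfl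
  have a1 := aux 0 t 0 le_rfl ht0 ht1 le_rfl zero_le_one
  have a2 := aux t 1 1 ht0 ht1 le_rfl zero_le_one le_rfl
  rw [← i1] at a1
  rw [← i2] at a2
  rw [abs_le] at *
  constructor <;> linarith [a1.1, a1.2, a2.1, a2.2]

lemma abs_le_of_fderiv_le {d : ℕ} (hd : 0 < d) (ψ : (Fin d → ℝ) → ℝ) (hψ : Differentiable ℝ ψ)
    (hψ0 : ∀ y, y ∉ unitCube d → ψ y = 0) (P : ℝ) (hP : ∀ y, ‖fderiv ℝ ψ y‖ ≤ P)
    (y : Fin d → ℝ) : |ψ y| ≤ P := by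
  have hP0 : 0 ≤ P := (norm_nonneg _).trans (hP 0)
  by_cases hy : y ∈ unitCube d
  · set k : Fin d := ⟨0, hd⟩
    set y' := Function.update y k 0 with hy'
    have h0 : ψ y' = 0 := by
      apply hψ0
      intro h
      have := (h k).1
      simp [hy'] at this
    have h1 := Convex.norm_image_sub_le_of_norm_fderiv_le (𝕜 := ℝ) (f := ψ) (s := Set.univ) (C := P)
      (fun x _ => hψ x) (fun x _ => hP x) convex_univ (Set.mem_univ y') (Set.mem_univ y)
    rw [h0, sub_zero, Real.norm_eq_abs] at h1
    refine h1.trans (mul_le_of_le_one_right hP0 ?_)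
    rw [pi_norm_le_iff_of_nonneg zero_le_one]
    intro j
    by_cases hj : j = k
    · subst hj
      have := hy k
      simp only [hy', Pi.sub_apply, Function.update_self, sub_zero, Real.norm_eq_abs, abs_le]
      constructor <;> linarith [this.1, this.2]
    · simp [hy', hj]
  · rw [hψ0 y hy]
    simpa using hP0

lemma continuous_insertNth' {d : ℕ} (i : Fin (d + 1)) :
    Continuous (fun p : ℝ × (Fin d → ℝ) => (i.insertNth p.1 p.2 : Fin (d + 1) → ℝ)) := by
  refine continuous_pi fun j => ?_
  refine Fin.succAboveCases i ?_ (fun k => ?_) j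
  · simpa using continuous_fst
  · simp only [Fin.insertNth_apply_succAbove]
    fun_prop

lemma slice_est {d : ℕ} (hd : 0 < d) (i : Fin (d + 1))
    (Φ : (Fin (d + 1) → ℝ) → (Fin (d + 1) → ℝ))
    (hΦc : ContinuousOn Φ (Set.Icc 0 1))
    (hΦd : ∀ x ∈ unitCube (d + 1), DifferentiableAt ℝ Φ x)
    (hdiv : ∀ x ∈ unitCube (d + 1), ∑ j, pdn j (fun y => Φ y j) x = 0)
    (u : (Fin d → ℝ) → ℝ) (hu : ContDiff ℝ 1 u) (hu0 : ∀ x, x ∉ unitCube d → u x = 0)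
    (t : ℝ) (ht0 : 0 ≤ t) (ht1 : t ≤ 1) (A a : ℝ) (hA : 0 < A)
    (hAe : A = ∫ x in Set.Icc (0 : Fin (d + 1) → ℝ) 1, ‖Φ x‖)
    (hae : a = ∫ y in Set.Icc (0 : Fin d → ℝ) 1, ‖Φ (i.insertNth t y)‖) :
    |∫ y in Set.Icc (0 : Fin d → ℝ) 1, Φ (i.insertNth t y) i * u y| ≤
      ((d : ℝ) + 9) * A ^ (((d : ℝ) + 1)⁻¹) * (a + A) ^ (1 - ((d : ℝ) + 1)⁻¹) *
        (∫ y, ‖fderiv ℝ u y‖ ^ (d + 1)) ^ (((d : ℝ) + 1)⁻¹) := by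
  have ha : 0 ≤ a := by
    rw [hae]
    exact integral_nonneg fun y => norm_nonneg _
  have hs : 0 < a + A := by linarith
  set θ : ℝ := ((d : ℝ) + 1)⁻¹ with hθ
  set S : ℝ := (∫ y, ‖fderiv ℝ u y‖ ^ (d + 1)) ^ θ with hS
  have hS0 : 0 ≤ S := Real.rpow_nonneg (integral_nonneg fun y => by positivity) _
  set ε := A / (a + A) with hε
  have hε0 : 0 < ε := by positivity
  have hε1 : ε ≤ 1 := by
    rw [hε, div_le_one hs]
    linarith
  obtain ⟨ψ, hψ, hψ', hψ0, hap, hlip⟩ := slice_approx d u hu hu0 ε hε0 hε1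
  set P := 2 * ε ^ (θ - 1) * S with hPdef
  have hψP := abs_le_of_fderiv_le hd ψ hψ hψ0 P hlip
  have hfl := flux_bound i Φ hΦc hΦd hdiv ψ hψ hψ' hψ0 P hψP hlip t ht0 ht1
  rw [← hAe] at hfl
  have hsl : ContinuousOn (fun y => Φ (i.insertNth t y)) (Set.Icc (0 : Fin d → ℝ) 1) := by
    apply hΦc.comp
    · exact ((continuous_insertNth' i).comp (Continuous.prodMk_right t)).continuousOn
    · intro y hy
      exact insertNth_mem_Icc i t y ⟨ht0, ht1⟩ hy
  have hsli : ContinuousOn (fun y => Φ (i.insertNth t y) i) (Set.Icc (0 : Fin d → ℝ) 1) :=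
    (continuous_apply i).comp_continuousOn hsl
  have hi1 : IntegrableOn (fun y => Φ (i.insertNth t y) i * (u y - ψ y)) (Set.Icc (0 : Fin d → ℝ) 1) :=
    (hsli.mul (hu.continuous.sub hψ.continuous).continuousOn).integrableOn_compact isCompact_Icc
  have hi2 : IntegrableOn (fun y => Φ (i.insertNth t y) i * ψ y) (Set.Icc (0 : Fin d → ℝ) 1) :=
    (hsli.mul hψ.continuous.continuousOn).integrableOn_compact isCompact_Icc
  have hsplit : ∫ y in Set.Icc (0 : Fin d → ℝ) 1, Φ (i.insertNth t y) i * u y =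
      (∫ y in Set.Icc (0 : Fin d → ℝ) 1, Φ (i.insertNth t y) i * (u y - ψ y)) +
      ∫ y in Set.Icc (0 : Fin d → ℝ) 1, Φ (i.insertNth t y) i * ψ y := by
    rw [← integral_add hi1 hi2]
    congr 1
    ext y
    ring
  have h1 : |∫ y in Set.Icc (0 : Fin d → ℝ) 1, Φ (i.insertNth t y) i * (u y - ψ y)| ≤
      (((d : ℝ) + 1) * ε ^ θ * S) * a := by
    rw [hae, ← integral_const_mul, ← Real.norm_eq_abs]
    apply norm_integral_le_of_norm_le
    · exact ((hsl.norm).integrableOn_compact isCompact_Icc).const_mul _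
    · refine (ae_restrict_iff' measurableSet_Icc).2 (Filter.Eventually.of_forall fun y hy => ?_)
      rw [norm_mul, mul_comm]
      exact mul_le_mul (hap y hy) (norm_le_pi_norm _ i) (norm_nonneg _) (by positivity)
  have e1 : (a + A) * ε ^ θ = A ^ θ * (a + A) ^ (1 - θ) := by
    rw [hε, Real.div_rpow hA.le hs.le, Real.rpow_sub hs, Real.rpow_one]
    ring
  have e2 : A * ε ^ (θ - 1) = A ^ θ * (a + A) ^ (1 - θ) := by
    rw [hε, Real.div_rpow hA.le hs.le, Real.rpow_sub hs, Real.rpow_one, Real.rpow_sub hA,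
      Real.rpow_one, Real.rpow_sub hs, Real.rpow_one]
    have := Real.rpow_pos_of_pos hs θ
    field_simp
  rw [hsplit]
  refine (abs_add_le _ _).trans ((add_le_add h1 hfl).trans ?_)
  have e3 : (((d : ℝ) + 1) * ε ^ θ * S) * a ≤ ((d : ℝ) + 1) * S * ((a + A) * ε ^ θ) := by
    have : 0 ≤ ((d : ℝ) + 1) * ε ^ θ * S * A := by positivity
    nlinarith
  have e4 : 4 * P * A = 8 * S * (A * ε ^ (θ - 1)) := by
    rw [hPdef]; ring
  rw [e4, e2]
  rw [e1] at e3
  linarith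

lemma fubini_cube {d : ℕ} (i : Fin (d + 1)) (f : (Fin (d + 1) → ℝ) → ℝ)
    (hf : ContinuousOn f (Set.Icc 0 1)) :
    IntegrableOn (fun t => ∫ y in Set.Icc (0 : Fin d → ℝ) 1, f (i.insertNth t y)) (Set.Icc (0 : ℝ) 1)
    ∧ ∫ x in Set.Icc (0 : Fin (d + 1) → ℝ) 1, f x =
      ∫ t in Set.Icc (0 : ℝ) 1, ∫ y in Set.Icc (0 : Fin d → ℝ) 1, f (i.insertNth t y) := by
  have hmp := (volume_preserving_piFinSuccAbove (fun _ : Fin (d + 1) => ℝ) i).symm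
  set e := (MeasurableEquiv.piFinSuccAbove (fun _ : Fin (d + 1) => ℝ) i).symm with he
  have hpre : e ⁻¹' (Set.Icc (0 : Fin (d + 1) → ℝ) 1) =
      (Set.Icc (0 : ℝ) 1) ×ˢ (Set.Icc (0 : Fin d → ℝ) 1) := by
    ext p
    have hep : e p = i.insertNth p.1 p.2 := rfl
    rw [Set.mem_preimage, hep]
    constructor
    · rintro ⟨h1, h2⟩
      refine ⟨⟨by simpa using h1 i, by simpa using h2 i⟩, fun k => ?_, fun k => ?_⟩
      · simpa using h1 (i.succAbove k)
      · simpa using h2 (i.succAbove k)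
    · rintro ⟨h1, h2⟩
      exact insertNth_mem_Icc i _ _ h1 h2
  have hfi : IntegrableOn f (Set.Icc 0 1) := hf.integrableOn_compact isCompact_Icc
  have h1 : IntegrableOn (f ∘ e) ((Set.Icc (0 : ℝ) 1) ×ˢ (Set.Icc (0 : Fin d → ℝ) 1)) := by
    rw [← hpre]
    exact (hmp.integrableOn_comp_preimage e.measurableEmbedding).2 hfi
  have h2 : ∫ x in Set.Icc (0 : Fin (d + 1) → ℝ) 1, f x =
      ∫ p in (Set.Icc (0 : ℝ) 1) ×ˢ (Set.Icc (0 : Fin d → ℝ) 1), f (e p) := by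
    rw [← hpre]
    exact (hmp.setIntegral_preimage_emb e.measurableEmbedding f _).symm
  constructor
  · have h3 : Integrable (f ∘ e) ((volume.restrict (Set.Icc (0 : ℝ) 1)).prod
        (volume.restrict (Set.Icc (0 : Fin d → ℝ) 1))) := by
      rw [Measure.prod_restrict]
      exact h1
    exact h3.integral_prod_left
  · rw [h2]
    exact setIntegral_prod (f ∘ e) h1

lemma holder_real {α : Type*} [MeasurableSpace α] (μ : Measure α) (f g : α → ℝ)
    (hf : Integrable f μ) (hg : Integrable g μ) (hf0 : ∀ x, 0 ≤ f x) (hg0 : ∀ x, 0 ≤ g x)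
    (θ : ℝ) (h0 : 0 ≤ θ) (h1 : θ ≤ 1) :
    Integrable (fun x => f x ^ θ * g x ^ (1 - θ)) μ ∧
    ∫ x, f x ^ θ * g x ^ (1 - θ) ∂μ ≤ (∫ x, f x ∂μ) ^ θ * (∫ x, g x ∂μ) ^ (1 - θ) := by
  have h1' : 0 ≤ 1 - θ := by linarith
  have hm : AEStronglyMeasurable (fun x => f x ^ θ * g x ^ (1 - θ)) μ :=
    ((hf.aemeasurable.pow_const θ).mul (hg.aemeasurable.pow_const (1 - θ))).aestronglyMeasurable
  have hnn : ∀ x, 0 ≤ f x ^ θ * g x ^ (1 - θ) := fun x =>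
    mul_nonneg (Real.rpow_nonneg (hf0 x) _) (Real.rpow_nonneg (hg0 x) _)
  constructor
  · refine Integrable.mono' (hf.add hg) hm (Filter.Eventually.of_forall fun x => ?_)
    rw [Real.norm_of_nonneg (hnn x)]
    have := Real.geom_mean_le_arith_mean2_weighted h0 h1' (hf0 x) (hg0 x) (by ring)
    refine this.trans ?_
    have := hf0 x
    have := hg0 x
    simp only [Pi.add_apply]
    nlinarith
  · have hl := ENNReal.lintegral_mul_norm_pow_le (μ := μ) (f := fun x => ENNReal.ofReal (f x))
      (g := fun x => ENNReal.ofReal (g x)) hf.aemeasurable.ennreal_ofReal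
      hg.aemeasurable.ennreal_ofReal h0 h1' (by ring)
    rw [← ofReal_integral_eq_lintegral_ofReal hf (Filter.Eventually.of_forall hf0),
      ← ofReal_integral_eq_lintegral_ofReal hg (Filter.Eventually.of_forall hg0),
      ENNReal.ofReal_rpow_of_nonneg (integral_nonneg hf0) h0,
      ENNReal.ofReal_rpow_of_nonneg (integral_nonneg hg0) h1',
      ← ENNReal.ofReal_mul (Real.rpow_nonneg (integral_nonneg hf0) _)] at hl
    rw [integral_eq_lintegral_of_nonneg_ae (Filter.Eventually.of_forall hnn) hm]
    apply ENNReal.toReal_le_of_le_ofReal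
    · exact mul_nonneg (Real.rpow_nonneg (integral_nonneg hf0) _)
        (Real.rpow_nonneg (integral_nonneg hg0) _)
    · refine le_trans (le_of_eq ?_) hl
      congr 1
      ext x
      rw [ENNReal.ofReal_mul (Real.rpow_nonneg (hf0 x) _),
        ENNReal.ofReal_rpow_of_nonneg (hf0 x) h0, ENNReal.ofReal_rpow_of_nonneg (hg0 x) h1']

lemma fderiv_abs_le {d : ℕ} (φ : (Fin (d + 1) → ℝ) → (Fin (d + 1) → ℝ)) (i : Fin (d + 1))
    (x v : Fin (d + 1) → ℝ) :
    |fderiv ℝ (fun y => φ y i) x v| ≤ ((d : ℝ) + 1) * ‖jacn φ x‖ * ‖v‖ := by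
  have h1 : fderiv ℝ (fun y => φ y i) x v = ∑ j, v j * jacn φ x i j := by
    conv_lhs => rw [pi_eq_sum_univ' v]
    rw [map_sum]
    refine Finset.sum_congr rfl fun j _ => ?_
    rw [map_smul, smul_eq_mul]
    rfl
  rw [h1]
  calc |∑ j, v j * jacn φ x i j| ≤ ∑ j, |v j * jacn φ x i j| := Finset.abs_sum_le_sum_abs _ _
    _ ≤ ∑ _j : Fin (d + 1), ‖v‖ * ‖jacn φ x‖ := by
      refine Finset.sum_le_sum fun j _ => ?_
      rw [abs_mul]
      refine mul_le_mul (norm_le_pi_norm v j) ?_ (abs_nonneg _) (norm_nonneg _)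
      exact (norm_le_pi_norm (jacn φ x i) j).trans (norm_le_pi_norm (jacn φ x) i)
    _ = ((d : ℝ) + 1) * ‖jacn φ x‖ * ‖v‖ := by
      simp
      ring

lemma continuous_jacn {n : ℕ} (φ : (Fin n → ℝ) → (Fin n → ℝ)) (hφ : ContDiff ℝ 1 φ) :
    Continuous (fun x => jacn φ x) := by
  refine continuous_pi fun i => continuous_pi fun j => ?_
  have h : ContDiff ℝ 1 (fun y => φ y i) := contDiff_pi.1 hφ i
  exact (h.continuous_fderiv one_ne_zero).clm_apply continuous_const

/-- The linear part of the slice embedding. -/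
noncomputable def insC {d : ℕ} (i : Fin (d + 1)) : (Fin d → ℝ) →L[ℝ] (Fin (d + 1) → ℝ) :=
  LinearMap.toContinuousLinearMap
    { toFun := fun v => i.insertNth 0 v
      map_add' := by
        intro v w
        ext j
        refine Fin.succAboveCases i ?_ (fun k => ?_) j <;> simp
      map_smul' := by
        intro c w
        ext j
        refine Fin.succAboveCases i ?_ (fun k => ?_) j <;> simp }

lemma insC_apply {d : ℕ} (i : Fin (d + 1)) (v : Fin d → ℝ) : insC i v = i.insertNth 0 v := rfl

lemma insC_norm_le {d : ℕ} (i : Fin (d + 1)) (v : Fin d → ℝ) : ‖insC i v‖ ≤ ‖v‖ := by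
  rw [pi_norm_le_iff_of_nonneg (norm_nonneg _)]
  intro j
  rw [insC_apply]
  refine Fin.succAboveCases i ?_ (fun k => ?_) j
  · simp
  · simpa using norm_le_pi_norm v k

lemma insertNth_eq {d : ℕ} (i : Fin (d + 1)) (t : ℝ) (v : Fin d → ℝ) :
    (i.insertNth t v : Fin (d + 1) → ℝ) = insC i v + Pi.single i t := by
  ext j
  rw [Pi.add_apply, insC_apply]
  refine Fin.succAboveCases i ?_ (fun k => ?_) j
  · simp
  · simp

lemma slice_hasFDerivAt {d : ℕ} (φ : (Fin (d + 1) → ℝ) → (Fin (d + 1) → ℝ)) (hφ : ContDiff ℝ 1 φ)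
    (i : Fin (d + 1)) (t : ℝ) (y : Fin d → ℝ) :
    HasFDerivAt (fun y => φ (i.insertNth t y) i)
      ((fderiv ℝ (fun x => φ x i) (i.insertNth t y)).comp (insC i)) y := by
  have h : ContDiff ℝ 1 (fun y => φ y i) := contDiff_pi.1 hφ i
  have h1 : HasFDerivAt (fun y : Fin d → ℝ => (i.insertNth t y : Fin (d + 1) → ℝ)) (insC i) y := by
    have := (insC i).hasFDerivAt (x := y) |>.add_const (Pi.single i t)
    simp only [insertNth_eq]
    exact this
  exact (h.differentiable one_ne_zero _).hasFDerivAt.comp y h1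

lemma slice_contDiff {d : ℕ} (φ : (Fin (d + 1) → ℝ) → (Fin (d + 1) → ℝ)) (hφ : ContDiff ℝ 1 φ)
    (i : Fin (d + 1)) (t : ℝ) : ContDiff ℝ 1 (fun y => φ (i.insertNth t y) i) := by
  have h : ContDiff ℝ 1 (fun y => φ y i) := contDiff_pi.1 hφ i
  simp only [insertNth_eq]
  exact h.comp ((insC i).contDiff.add contDiff_const)

lemma slice_grad_integral_le {d : ℕ} (φ : (Fin (d + 1) → ℝ) → (Fin (d + 1) → ℝ))
    (hφ : ContDiff ℝ 1 φ) (h0 : ∀ x, x ∉ unitCube (d + 1) → φ x = 0)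
    (i : Fin (d + 1)) (t : ℝ) :
    ∫ y, ‖fderiv ℝ (fun y => φ (i.insertNth t y) i) y‖ ^ (d + 1) ≤
      ((d : ℝ) + 1) ^ (d + 1) *
        ∫ y in Set.Icc (0 : Fin d → ℝ) 1, ‖jacn φ (i.insertNth t y)‖ ^ (d + 1) := by
  have hz : ∀ y, y ∉ Set.Icc (0 : Fin d → ℝ) 1 →
      fderiv ℝ (fun y => φ (i.insertNth t y) i) y = 0 := by
    intro y hy
    have hev : (fun y => φ (i.insertNth t y) i) =ᶠ[nhds y] fun _ => 0 := by
      filter_upwards [isClosed_Icc.isOpen_compl.mem_nhds hy] with w hw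
      rw [h0, Pi.zero_apply]
      intro h
      apply hw
      refine ⟨fun k => ?_, fun k => ?_⟩
      · have := (h (i.succAbove k)).1.le
        simpa using this
      · have := (h (i.succAbove k)).2.le
        simpa using this
    rw [hev.fderiv_eq]
    simp
  rw [← setIntegral_eq_integral_of_forall_compl_eq_zero (s := Set.Icc (0 : Fin d → ℝ) 1)
    (fun y hy => by rw [hz y hy]; simp), ← integral_const_mul]
  have hc1 : Continuous (fderiv ℝ (fun y => φ (i.insertNth t y) i)) :=
    (slice_contDiff φ hφ i t).continuous_fderiv one_ne_zero
  have hc2 : Continuous (fun y => jacn φ (i.insertNth t y)) :=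
    (continuous_jacn φ hφ).comp ((continuous_insertNth' i).comp (Continuous.prodMk_right t))
  apply setIntegral_mono_on
  · exact (hc1.norm.pow _).continuousOn.integrableOn_compact isCompact_Icc
  · exact (continuous_const.mul (hc2.norm.pow _)).continuousOn.integrableOn_compact isCompact_Icc
  · exact measurableSet_Icc
  · intro y _
    rw [← mul_pow]
    refine pow_le_pow_left₀ (norm_nonneg _) ?_ _
    rw [(slice_hasFDerivAt φ hφ i t y).fderiv]
    refine ContinuousLinearMap.opNorm_le_bound _ (by positivity) fun v => ?_
    rw [ContinuousLinearMap.comp_apply, Real.norm_eq_abs]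
    refine (fderiv_abs_le φ i _ _).trans ?_
    gcongr
    exact insC_norm_le i v

/-- The estimate for one component, in dimension at least two. -/
lemma component_est {d : ℕ} (hd : 0 < d) (i : Fin (d + 1))
    (Φ φ : (Fin (d + 1) → ℝ) → (Fin (d + 1) → ℝ))
    (hΦc : ContinuousOn Φ (Set.Icc 0 1))
    (hΦd : ∀ x ∈ unitCube (d + 1), DifferentiableAt ℝ Φ x)
    (hdiv : ∀ x ∈ unitCube (d + 1), ∑ j, pdn j (fun y => Φ y j) x = 0)
    (hφ : ContDiff ℝ 1 φ) (h0 : ∀ x, x ∉ unitCube (d + 1) → φ x = 0)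
    (hA : 0 < ∫ x in Set.Icc (0 : Fin (d + 1) → ℝ) 1, ‖Φ x‖) :
    ∫ x in Set.Icc (0 : Fin (d + 1) → ℝ) 1, Φ x i * φ x i ≤
      2 * ((d : ℝ) + 9) * ((d : ℝ) + 1) * (∫ x in Set.Icc (0 : Fin (d + 1) → ℝ) 1, ‖Φ x‖) *
        (∫ x in Set.Icc (0 : Fin (d + 1) → ℝ) 1, ‖jacn φ x‖ ^ (d + 1)) ^ (((d : ℝ) + 1)⁻¹) := by
  set A := ∫ x in Set.Icc (0 : Fin (d + 1) → ℝ) 1, ‖Φ x‖ with hAe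
  set θ : ℝ := ((d : ℝ) + 1)⁻¹ with hθ
  have hθ0 : 0 ≤ θ := by positivity
  have hθ1 : θ ≤ 1 := inv_le_one_of_one_le₀ (by linarith [Nat.cast_nonneg (α := ℝ) d])
  have hjc := continuous_jacn φ hφ
  set a : ℝ → ℝ := fun t => ∫ y in Set.Icc (0 : Fin d → ℝ) 1, ‖Φ (i.insertNth t y)‖ with ha
  set s : ℝ → ℝ := fun t => ∫ y in Set.Icc (0 : Fin d → ℝ) 1,
    ‖jacn φ (i.insertNth t y)‖ ^ (d + 1) with hs
  obtain ⟨fa1, fa2⟩ := fubini_cube i (fun x => ‖Φ x‖) hΦc.norm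
  obtain ⟨fs1, fs2⟩ := fubini_cube i (fun x => ‖jacn φ x‖ ^ (d + 1)) (hjc.norm.pow _).continuousOn
  have hΦφ : ContinuousOn (fun x => Φ x i * φ x i) (Set.Icc 0 1) :=
    ((continuous_apply i).comp_continuousOn hΦc).mul
      ((continuous_apply i).comp hφ.continuous).continuousOn
  obtain ⟨-, fp2⟩ := fubini_cube i (fun x => Φ x i * φ x i) hΦφ
  have ha0 : ∀ t, 0 ≤ a t := fun t => integral_nonneg fun y => norm_nonneg _
  have hs0 : ∀ t, 0 ≤ s t := fun t => integral_nonneg fun y => by positivity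
  have haA : IntegrableOn (fun t => a t + A) (Set.Icc (0 : ℝ) 1) :=
    fa1.add (integrableOn_const (by simp))
  obtain ⟨hh1, hh2⟩ := holder_real (volume.restrict (Set.Icc (0 : ℝ) 1)) s (fun t => a t + A)
    fs1 haA hs0 (fun t => add_nonneg (ha0 t) hA.le) θ hθ0 hθ1
  have hIaA : ∫ t in Set.Icc (0 : ℝ) 1, (a t + A) = 2 * A := by
    rw [integral_add fa1 (integrableOn_const (by simp)), ← fa2]
    simp
    ring
  rw [hIaA, ← fs2] at hh2
  have hpt : ∀ t ∈ Set.Icc (0 : ℝ) 1,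
      ‖∫ y in Set.Icc (0 : Fin d → ℝ) 1, Φ (i.insertNth t y) i * φ (i.insertNth t y) i‖ ≤
        ((d : ℝ) + 9) * ((d : ℝ) + 1) * A ^ θ * (s t ^ θ * (a t + A) ^ (1 - θ)) := by
    intro t ht
    have h1 := slice_est hd i Φ hΦc hΦd hdiv (fun y => φ (i.insertNth t y) i)
      (slice_contDiff φ hφ i t) (by
        intro y hy
        rw [h0, Pi.zero_apply]
        intro h
        apply hy
        intro k
        have := h (i.succAbove k)
        simpa using this) t ht.1 ht.2 A (a t) hA hAe rfl
    rw [Real.norm_eq_abs]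
    refine h1.trans ?_
    have h2 := Real.rpow_le_rpow (integral_nonneg fun y => by positivity)
      (slice_grad_integral_le φ hφ h0 i t) hθ0
    have h3 : (((d : ℝ) + 1) ^ (d + 1) * s t) ^ θ = ((d : ℝ) + 1) * s t ^ θ := by
      rw [Real.mul_rpow (by positivity) (hs0 t)]
      congr 1
      have := Real.pow_rpow_inv_natCast (x := (d : ℝ) + 1) (n := d + 1) (by positivity) (by omega)
      push_cast at this
      exact this
    have h4 := h2.trans_eq h3
    have h5 : 0 ≤ ((d : ℝ) + 9) * A ^ θ * (a t + A) ^ (1 - θ) :=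
      mul_nonneg (by positivity) (Real.rpow_nonneg (add_nonneg (ha0 t) hA.le) _)
    refine (mul_le_mul_of_nonneg_left h4 h5).trans_eq ?_
    ring
  rw [fp2]
  refine (le_abs_self _).trans ?_
  rw [← Real.norm_eq_abs]
  have h6 := norm_integral_le_of_norm_le (hh1.const_mul (((d : ℝ) + 9) * ((d : ℝ) + 1) * A ^ θ))
    ((ae_restrict_iff' measurableSet_Icc).2 (Filter.Eventually.of_forall hpt))
  refine h6.trans ?_
  rw [integral_const_mul]
  set G := (∫ x in Set.Icc (0 : Fin (d + 1) → ℝ) 1, ‖jacn φ x‖ ^ (d + 1)) ^ θ with hG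
  have hG0 : 0 ≤ G := Real.rpow_nonneg (integral_nonneg fun y => by positivity) _
  have h7 : A ^ θ * (2 * A) ^ (1 - θ) ≤ 2 * A := by
    calc A ^ θ * (2 * A) ^ (1 - θ) ≤ (2 * A) ^ θ * (2 * A) ^ (1 - θ) := by
          gcongr
          linarith
      _ = 2 * A := by
          rw [← Real.rpow_add (by positivity)]
          simp
  calc ((d : ℝ) + 9) * ((d : ℝ) + 1) * A ^ θ *
        ∫ t in Set.Icc (0 : ℝ) 1, s t ^ θ * (a t + A) ^ (1 - θ)
      ≤ ((d : ℝ) + 9) * ((d : ℝ) + 1) * A ^ θ * (G * (2 * A) ^ (1 - θ)) := by gcongr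
    _ = ((d : ℝ) + 9) * ((d : ℝ) + 1) * G * (A ^ θ * (2 * A) ^ (1 - θ)) := by ring
    _ ≤ ((d : ℝ) + 9) * ((d : ℝ) + 1) * G * (2 * A) := by gcongr
    _ = 2 * ((d : ℝ) + 9) * ((d : ℝ) + 1) * A * G := by ring

/-- The one-dimensional case. -/
lemma component_est_one (i : Fin (0 + 1))
    (Φ φ : (Fin (0 + 1) → ℝ) → (Fin (0 + 1) → ℝ))
    (hΦc : ContinuousOn Φ (Set.Icc 0 1))
    (hΦd : ∀ x ∈ unitCube (0 + 1), DifferentiableAt ℝ Φ x)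
    (hdiv : ∀ x ∈ unitCube (0 + 1), ∑ j, pdn j (fun y => Φ y j) x = 0)
    (hφ : ContDiff ℝ 1 φ) (h0 : ∀ x, x ∉ unitCube (0 + 1) → φ x = 0) :
    ∫ x in Set.Icc (0 : Fin (0 + 1) → ℝ) 1, Φ x i * φ x i ≤
      4 * (∫ x in Set.Icc (0 : Fin (0 + 1) → ℝ) 1, ‖Φ x‖) *
        (∫ x in Set.Icc (0 : Fin (0 + 1) → ℝ) 1, ‖jacn φ x‖) := by
  have hpr := cube_prob 0
  have hjc := continuous_jacn φ hφ
  set G := ∫ x in Set.Icc (0 : Fin (0 + 1) → ℝ) 1, ‖jacn φ x‖ with hG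
  obtain ⟨fs1, fs2⟩ := fubini_cube i (fun x => ‖jacn φ x‖) hjc.norm.continuousOn
  have hcol : ∀ f : (Fin 0 → ℝ) → ℝ, ∫ y in Set.Icc (0 : Fin 0 → ℝ) 1, f y = f 0 := by
    intro f
    have : f = fun _ => f 0 := by
      ext y
      rw [Subsingleton.elim y 0]
    rw [this, integral_const, probReal_univ, one_smul]
  simp only [hcol] at fs1 fs2
  have hΦφ : ContinuousOn (fun x => Φ x i * φ x i) (Set.Icc 0 1) :=
    ((continuous_apply i).comp_continuousOn hΦc).mul
      ((continuous_apply i).comp hφ.continuous).continuousOn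
  obtain ⟨-, fp2⟩ := fubini_cube i (fun x => Φ x i * φ x i) hΦφ
  have hd : ∀ s : ℝ, HasDerivAt (fun s => φ (i.insertNth s (0 : Fin 0 → ℝ)) i)
      (fderiv ℝ (fun x => φ x i) (i.insertNth s (0 : Fin 0 → ℝ)) (Pi.single i 1)) s := by
    intro s
    have h : ContDiff ℝ 1 (fun y => φ y i) := contDiff_pi.1 hφ i
    have h1 : HasDerivAt (fun s : ℝ => (i.insertNth s (0 : Fin 0 → ℝ) : Fin (0 + 1) → ℝ))
        (Pi.single i 1) s := by
      rw [hasDerivAt_pi]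
      intro j
      have hj : j = i := by omega
      subst hj
      simp only [Fin.insertNth_apply_same, Pi.single_eq_same]
      exact hasDerivAt_id s
    exact (h.differentiable one_ne_zero _).hasFDerivAt.comp_hasDerivAt s h1
  have hbd : ∀ t ∈ Set.Icc (0 : ℝ) 1, |φ (i.insertNth t (0 : Fin 0 → ℝ)) i| ≤ G := by
    intro t ht
    have hz : φ (i.insertNth (0 : ℝ) (0 : Fin 0 → ℝ)) i = 0 := by
      rw [h0, Pi.zero_apply]
      intro h
      have := (h i).1
      simp at this
    have hc : Continuous fun s : ℝ =>
        fderiv ℝ (fun x => φ x i) (i.insertNth s (0 : Fin 0 → ℝ)) (Pi.single i 1) := by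
      have h : ContDiff ℝ 1 (fun y => φ y i) := contDiff_pi.1 hφ i
      exact ((h.continuous_fderiv one_ne_zero).comp
        ((continuous_insertNth' i).comp (Continuous.prodMk_left 0))).clm_apply continuous_const
    have hftc := intervalIntegral.integral_eq_sub_of_hasDerivAt (a := 0) (b := t)
      (fun s _ => hd s) (hc.intervalIntegrable _ _)
    rw [hz, sub_zero, intervalIntegral.integral_of_le ht.1] at hftc
    rw [← hftc, ← Real.norm_eq_abs, hG, fs2]
    have hsub : Set.Ioc 0 t ⊆ Set.Icc (0 : ℝ) 1 := fun r hr => ⟨hr.1.le, hr.2.trans ht.2⟩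
    refine (norm_integral_le_of_norm_le (fs1.mono_set hsub)
      (Filter.Eventually.of_forall fun r => ?_)).trans ?_
    · exact (norm_le_pi_norm (jacn φ (i.insertNth r (0 : Fin 0 → ℝ)) i) i).trans
        (norm_le_pi_norm (jacn φ (i.insertNth r (0 : Fin 0 → ℝ))) i)
    · apply setIntegral_mono_set fs1
      · exact Filter.Eventually.of_forall fun x => norm_nonneg _
      · exact Filter.Eventually.of_forall hsub
  have hG0 : 0 ≤ G := integral_nonneg fun x => norm_nonneg _
  rw [fp2]
  refine (le_abs_self _).trans ?_
  rw [← Real.norm_eq_abs]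
  have h6 := norm_setIntegral_le_of_norm_le_const (μ := volume) (s := Set.Icc (0 : ℝ) 1)
    (f := fun t => ∫ y in Set.Icc (0 : Fin 0 → ℝ) 1, Φ (i.insertNth t y) i * φ (i.insertNth t y) i)
    (C := 4 * G * ∫ x in Set.Icc (0 : Fin (0 + 1) → ℝ) 1, ‖Φ x‖) (by simp) (by
      intro t ht
      rw [Real.norm_eq_abs]
      refine flux_bound i Φ hΦc hΦd hdiv (fun y => φ (i.insertNth t y) i)
        ((slice_contDiff φ hφ i t).differentiable one_ne_zero)
        ((slice_contDiff φ hφ i t).continuous_fderiv one_ne_zero) ?_ G ?_ ?_ t ht.1 ht.2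
      · intro y hy
        exact absurd (fun k => k.elim0) hy
      · intro y
        rw [Subsingleton.elim y 0]
        exact hbd t ht
      · intro y
        refine ContinuousLinearMap.opNorm_le_bound _ hG0 fun v => ?_
        rw [Subsingleton.elim v 0, map_zero, norm_zero, norm_zero, mul_zero])
  refine h6.trans (le_of_eq ?_)
  simp
  ring

lemma unitCube_eq_pi (n : ℕ) : unitCube n = Set.univ.pi fun _ : Fin n => Set.Ioo (0 : ℝ) 1 := by
  ext x
  simp only [unitCube, Set.mem_setOf_eq, Set.mem_pi, Set.mem_univ, true_imp_iff]

lemma isOpen_unitCube (n : ℕ) : IsOpen (unitCube n) := by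
  rw [unitCube_eq_pi]
  exact isOpen_set_pi Set.finite_univ fun _ _ => isOpen_Ioo

lemma closure_unitCube (n : ℕ) : closure (unitCube n) = Set.Icc 0 1 := by
  rw [unitCube_eq_pi, closure_pi_set]
  simp only [closure_Ioo (zero_ne_one' ℝ)]
  exact Set.pi_univ_Icc 0 1

lemma restrict_unitCube (n : ℕ) :
    (volume.restrict (unitCube n) : Measure (Fin n → ℝ)) = volume.restrict (Set.Icc 0 1) := by
  rw [unitCube_eq_pi]
  exact Measure.restrict_congr_set
    (Measure.univ_pi_Ioo_ae_eq_Icc (f := (0 : Fin n → ℝ)) (g := (1 : Fin n → ℝ)))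

lemma component_est_all {d : ℕ} (i : Fin (d + 1))
    (Φ φ : (Fin (d + 1) → ℝ) → (Fin (d + 1) → ℝ))
    (hΦc : ContinuousOn Φ (Set.Icc 0 1))
    (hΦd : ∀ x ∈ unitCube (d + 1), DifferentiableAt ℝ Φ x)
    (hdiv : ∀ x ∈ unitCube (d + 1), ∑ j, pdn j (fun y => Φ y j) x = 0)
    (hφ : ContDiff ℝ 1 φ) (h0 : ∀ x, x ∉ unitCube (d + 1) → φ x = 0) :
    ∫ x in Set.Icc (0 : Fin (d + 1) → ℝ) 1, Φ x i * φ x i ≤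
      2 * ((d : ℝ) + 9) * ((d : ℝ) + 1) * (∫ x in Set.Icc (0 : Fin (d + 1) → ℝ) 1, ‖Φ x‖) *
        (∫ x in Set.Icc (0 : Fin (d + 1) → ℝ) 1, ‖jacn φ x‖ ^ (d + 1)) ^ (((d : ℝ) + 1)⁻¹) := by
  have hA0 : 0 ≤ ∫ x in Set.Icc (0 : Fin (d + 1) → ℝ) 1, ‖Φ x‖ :=
    integral_nonneg fun x => norm_nonneg _
  rcases Nat.eq_zero_or_pos d with rfl | hd
  · refine (component_est_one i Φ φ hΦc hΦd hdiv hφ h0).trans ?_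
    simp only [Nat.cast_zero, zero_add, pow_one, inv_one, Real.rpow_one, mul_one]
    have hG0 : 0 ≤ ∫ x in Set.Icc (0 : Fin (0 + 1) → ℝ) 1, ‖jacn φ x‖ :=
      integral_nonneg fun x => norm_nonneg _
    apply mul_le_mul_of_nonneg_right _ hG0
    apply mul_le_mul_of_nonneg_right _ hA0
    norm_num
  · rcases hA0.eq_or_lt with hA | hA
    · rw [← hA, mul_zero, zero_mul]
      obtain ⟨B, hB⟩ := isCompact_Icc.exists_bound_of_continuousOn (s := Set.Icc (0 : Fin (d + 1) → ℝ) 1)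
        hφ.continuous.continuousOn
      have h1 : ‖∫ x in Set.Icc (0 : Fin (d + 1) → ℝ) 1, Φ x i * φ x i‖ ≤
          ∫ x in Set.Icc (0 : Fin (d + 1) → ℝ) 1, B * ‖Φ x‖ := by
        apply norm_integral_le_of_norm_le
        · exact (hΦc.norm.integrableOn_compact isCompact_Icc).const_mul B
        · refine (ae_restrict_iff' measurableSet_Icc).2 (Filter.Eventually.of_forall fun x hx => ?_)
          rw [norm_mul, mul_comm]
          exact mul_le_mul ((norm_le_pi_norm _ i).trans (hB x hx)) (norm_le_pi_norm _ i)
            (norm_nonneg _) ((norm_nonneg _).trans (hB x hx))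
      rw [integral_const_mul, ← hA, mul_zero] at h1
      exact (le_abs_self _).trans h1
    · exact component_est hd i Φ φ hΦc hΦd hdiv hφ h0 hA

/-- Localized Bourgain–Brezis estimate: there is `c = c(n) > 0` such that for every
divergence-free `Φ ∈ C(closure (0,1)ⁿ; ℝⁿ) ∩ C¹((0,1)ⁿ; ℝⁿ)` and every
`φ ∈ C_c^∞((0,1)ⁿ; ℝⁿ)` one has
`∫_{(0,1)ⁿ} ⟨Φ, φ⟩ ≤ c ‖Φ‖_{L¹((0,1)ⁿ)} ‖∇φ‖_{Lⁿ((0,1)ⁿ)}`. -/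
theorem localized_bourgain_brezis (n : ℕ) (hn : 0 < n) :
    ∃ c : ℝ, 0 < c ∧
      ∀ Φ : (Fin n → ℝ) → (Fin n → ℝ),
        ContinuousOn Φ (closure (unitCube n)) → ContDiffOn ℝ 1 Φ (unitCube n) →
        (∀ x ∈ unitCube n, ∑ j, pdn j (fun y => Φ y j) x = 0) →
        ∀ φ : (Fin n → ℝ) → (Fin n → ℝ), ContDiff ℝ (⊤ : ℕ∞) φ → HasCompactSupport φ →
          tsupport φ ⊆ unitCube n →
            ∫ x in unitCube n, (∑ j, Φ x j * φ x j) ≤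
              c * (eLpNorm Φ 1 (volume.restrict (unitCube n))).toReal *
                (eLpNorm (fun x => jacn φ x) (n : ℝ≥0∞)
                  (volume.restrict (unitCube n))).toReal := by
  obtain ⟨d, rfl⟩ : ∃ d, n = d + 1 := ⟨n - 1, by omega⟩
  refine ⟨((d : ℝ) + 1) * (2 * ((d : ℝ) + 9) * ((d : ℝ) + 1)), by positivity, ?_⟩
  intro Φ hΦc hΦ1 hdiv φ hφ _ hsupp
  rw [closure_unitCube] at hΦc
  rw [restrict_unitCube]
  have hφ1 : ContDiff ℝ 1 φ := hφ.of_le (by exact_mod_cast le_top)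
  have h0 : ∀ x, x ∉ unitCube (d + 1) → φ x = 0 := fun x hx =>
    image_eq_zero_of_notMem_tsupport fun h => hx (hsupp h)
  have hΦd : ∀ x ∈ unitCube (d + 1), DifferentiableAt ℝ Φ x := fun x hx =>
    ((hΦ1.differentiableOn one_ne_zero) x hx).differentiableAt ((isOpen_unitCube _).mem_nhds hx)
  have hjc := continuous_jacn φ hφ1
  have hpr := cube_prob (d + 1)
  -- the norms as integrals
  have hN1 : (eLpNorm Φ 1 (volume.restrict (Set.Icc (0 : Fin (d + 1) → ℝ) 1))).toReal =
      ∫ x in Set.Icc (0 : Fin (d + 1) → ℝ) 1, ‖Φ x‖ := by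
    have hi : IntegrableOn Φ (Set.Icc 0 1) := hΦc.integrableOn_compact isCompact_Icc
    rw [integral_norm_eq_lintegral_enorm hi.aestronglyMeasurable, eLpNorm_one_eq_lintegral_enorm]
  have hN2 : (eLpNorm (fun x => jacn φ x) ((d + 1 : ℕ) : ℝ≥0∞)
      (volume.restrict (Set.Icc (0 : Fin (d + 1) → ℝ) 1))).toReal =
      (∫ x in Set.Icc (0 : Fin (d + 1) → ℝ) 1, ‖jacn φ x‖ ^ (d + 1)) ^ (((d : ℝ) + 1)⁻¹) := by
    obtain ⟨B, hB⟩ := isCompact_Icc.exists_bound_of_continuousOn (s := Set.Icc (0 : Fin (d + 1) → ℝ) 1)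
      hjc.continuousOn
    have hm : MemLp (fun x => jacn φ x) ((d + 1 : ℕ) : ℝ≥0∞)
        (volume.restrict (Set.Icc (0 : Fin (d + 1) → ℝ) 1)) :=
      MemLp.of_bound hjc.aestronglyMeasurable B
        ((ae_restrict_iff' measurableSet_Icc).2 (Filter.Eventually.of_forall hB))
    rw [hm.eLpNorm_eq_integral_rpow_norm (by simp) (ENNReal.natCast_ne_top _),
      ENNReal.toReal_ofReal (Real.rpow_nonneg (integral_nonneg fun x => by positivity) _)]
    simp only [ENNReal.toReal_natCast, Real.rpow_natCast]
    push_cast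
    rfl
  rw [hN1, hN2]
  have hIntegr : ∀ j ∈ (Finset.univ : Finset (Fin (d + 1))), Integrable (fun x => Φ x j * φ x j)
      (volume.restrict (Set.Icc (0 : Fin (d + 1) → ℝ) 1)) := fun j _ =>
    (((continuous_apply j).comp_continuousOn hΦc).mul
      ((continuous_apply j).comp hφ1.continuous).continuousOn).integrableOn_compact isCompact_Icc
  rw [integral_finsetSum _ hIntegr]
  refine (Finset.sum_le_sum fun j _ =>
    component_est_all j Φ φ hΦc hΦd hdiv hφ1 h0).trans (le_of_eq ?_)
  rw [Finset.sum_const, Finset.card_univ, Fintype.card_fin, nsmul_eq_mul]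
  push_cast
  ring
end
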